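/- Let p₀ be a polynomial of degree at most 1 with cell averages a on I₋₁ and b on I₀, let p₁ be a polynomial of degree at most 1 with cell averages b on I₀ and c on I₁, and let M be a polynomial of degree at most 2 with cell averages a on I₋₁, b on I₀ and c on I₁. Then at both Gauss quadrature points x_G = ±h/(2√3) one has M(x_G) = (1/2)·p₀(x_G) + (1/2)·p₁(x_G); i.e., the linear weights of the third-order WENO reconstruction at the two Gauss points of I₀ are γ₀ = γ₁ = 1/2. -/

import Mathlib

open Polynomial

/-!
The error `e = M - (p₀ + p₁) / 2` has degree at most 2 and mean zero over the central cell, so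
two-point Gauss quadrature gives `e (x_G) + e (-x_G) = 0`. Affine polynomials have cell averages
in arithmetic progression, and this forces the averages of `e` over the two outer cells to
coincide; hence `e` is even and vanishes at both Gauss points.
-/

theorem linearMap_eq_of_forall_X_pow {R E : Type*} [Semiring R] [AddCommMonoid E] [Module R E]
    {φ ψ : R[X] →ₗ[R] E} {N : ℕ} (hpow : ∀ n ≤ N, φ (X ^ n) = ψ (X ^ n))
    {p : R[X]} (hp : p.degree ≤ N) : φ p = ψ p := by
  classical
  have hmem := mem_degreeLE.mpr hp
  rw [degreeLE_eq_span_X_pow] at hmem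
  refine LinearMap.eqOn_span (fun q hq => ?_) hmem
  simp only [Finset.coe_image, Set.mem_image, Finset.coe_range, Set.mem_Iio] at hq
  obtain ⟨n, hn, rfl⟩ := hq
  exact hpow n (Nat.le_of_lt_succ hn)

theorem eval_add_sub_eval_sub_of_degree_le_two {R : Type*} [CommRing R] {p : R[X]}
    (hp : p.degree ≤ 2) (m x : R) :
    p.eval (m + x) - p.eval (m - x) = 2 * x * p.derivative.eval m := by
  rw [eq_quadratic_of_degree_le_two hp]
  simp only [eval_add, eval_mul, eval_C, eval_pow, eval_X, derivative_add, derivative_mul,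
    derivative_C, derivative_X_pow, derivative_X, eval_zero, eval_one, Nat.cast_ofNat]
  ring

/-- The average of a polynomial over the cell `[m - h/2, m + h/2]` of width `h` and centre `m`,
as a linear functional; it is zero when `h = 0`. -/
noncomputable def cellAverage (h m : ℝ) : ℝ[X] →ₗ[ℝ] ℝ where
  toFun p := (1 / h) * ∫ x in (m - h / 2)..(m + h / 2), p.eval x
  map_add' p q := by
    simp only [eval_add]
    rw [intervalIntegral.integral_add (p.continuous.intervalIntegrable _ _)
      (q.continuous.intervalIntegrable _ _), mul_add]
  map_smul' r p := by
    simp only [eval_smul, smul_eq_mul, intervalIntegral.integral_const_mul, RingHom.id_apply]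
    ring

theorem cellAverage_eq_integral {h m u v : ℝ} (hu : m - h / 2 = u) (hv : m + h / 2 = v)
    (p : ℝ[X]) : cellAverage h m p = (1 / h) * ∫ x in u..v, p.eval x := by
  subst hu hv
  rfl

theorem cellAverage_X_pow (h m : ℝ) (n : ℕ) :
    cellAverage h m (X ^ n) =
      (1 / h) * (((m + h / 2) ^ (n + 1) - (m - h / 2) ^ (n + 1)) / (n + 1)) := by
  simp only [cellAverage_eq_integral rfl rfl, eval_pow, eval_X, integral_pow]

theorem sq_gaussNode (h : ℝ) : (h / (2 * √3)) ^ 2 = h ^ 2 / 12 := by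
  rw [div_pow, mul_pow, Real.sq_sqrt (by norm_num)]
  norm_num

section

variable {h g : ℝ} {p : ℝ[X]}

theorem cellAverage_eq_eval_of_degree_le_one (hh : h ≠ 0) (m : ℝ) (hp : p.degree ≤ 1) :
    cellAverage h m p = p.eval m := by
  refine linearMap_eq_of_forall_X_pow (ψ := leval m) (N := 1) (fun n hn => ?_) hp
  rw [cellAverage_X_pow, leval_apply, eval_pow, eval_X]
  interval_cases n <;> field_simp <;> ring

theorem cellAverage_sub_add_cellAverage_add_of_degree_le_one (hh : h ≠ 0) (d m : ℝ)
    (hp : p.degree ≤ 1) :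
    cellAverage h (m - d) p + cellAverage h (m + d) p = 2 * cellAverage h m p := by
  simp only [cellAverage_eq_eval_of_degree_le_one hh _ hp]
  rw [eq_X_add_C_of_degree_le_one hp]
  simp only [eval_add, eval_mul, eval_C, eval_X]
  ring

theorem cellAverage_eq_gauss_of_degree_le_three (hh : h ≠ 0) (hg : g ^ 2 = h ^ 2 / 12) (m : ℝ)
    (hp : p.degree ≤ 3) :
    cellAverage h m p = (p.eval (m - g) + p.eval (m + g)) / 2 := by
  let gauss : ℝ[X] →ₗ[ℝ] ℝ := (1 / 2 : ℝ) • (leval (m - g) + leval (m + g))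
  have hgauss (q : ℝ[X]) : gauss q = (q.eval (m - g) + q.eval (m + g)) / 2 :=
    one_div_mul_eq_div _ _
  rw [← hgauss]
  refine linearMap_eq_of_forall_X_pow (N := 3) (fun n hn => ?_) hp
  rw [cellAverage_X_pow, hgauss, one_div, inv_mul_eq_iff_eq_mul₀ hh]
  simp only [eval_pow, eval_X]
  interval_cases n <;> push_cast
  · ring
  · ring
  · linear_combination -h * hg
  · linear_combination -3 * m * h * hg

theorem cellAverage_add_sub_cellAverage_sub_of_degree_le_two (hh : h ≠ 0) (d m : ℝ)
    (hp : p.degree ≤ 2) :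
    cellAverage h (m + d) p - cellAverage h (m - d) p = 2 * d * p.derivative.eval m := by
  have hp3 : p.degree ≤ 3 := hp.trans (by norm_num)
  have houter := eval_add_sub_eval_sub_of_degree_le_two hp m (d + h / (2 * √3))
  have hinner := eval_add_sub_eval_sub_of_degree_le_two hp m (d - h / (2 * √3))
  simp only [cellAverage_eq_gauss_of_degree_le_three hh (sq_gaussNode h) _ hp3,
    add_sub_assoc, add_assoc, sub_sub, sub_add]
  linarith

theorem eval_eq_zero_of_cellAverage_eq {d m : ℝ} (hh : h ≠ 0) (hd : d ≠ 0)
    (hg : g ^ 2 = h ^ 2 / 12) (hp : p.degree ≤ 2) (hzero : cellAverage h m p = 0)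
    (hsymm : cellAverage h (m - d) p = cellAverage h (m + d) p) : p.eval (m + g) = 0 := by
  have hderiv : p.derivative.eval m = 0 := by
    have hdiff := cellAverage_add_sub_cellAverage_sub_of_degree_le_two hh d m hp
    rw [hsymm, sub_self] at hdiff
    exact (mul_eq_zero.mp hdiff.symm).resolve_left (mul_ne_zero two_ne_zero hd)
  have heven := eval_add_sub_eval_sub_of_degree_le_two hp m g
  rw [hderiv, mul_zero] at heven
  rw [cellAverage_eq_gauss_of_degree_le_three hh hg m (hp.trans (by norm_num))] at hzero
  linarith

end

theorem weno_linear_weights_half_general {h d g m a b c : ℝ} {p₀ p₁ M : ℝ[X]}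
    (hh : h ≠ 0) (hd : d ≠ 0) (hg : g ^ 2 = h ^ 2 / 12)
    (hp₀deg : p₀.degree ≤ 1) (hp₁deg : p₁.degree ≤ 1) (hMdeg : M.degree ≤ 2)
    (hp₀a : cellAverage h (m - d) p₀ = a) (hp₀b : cellAverage h m p₀ = b)
    (hp₁b : cellAverage h m p₁ = b) (hp₁c : cellAverage h (m + d) p₁ = c)
    (hMa : cellAverage h (m - d) M = a) (hMb : cellAverage h m M = b)
    (hMc : cellAverage h (m + d) M = c) :
    M.eval (m + g) = (1 / 2) * p₀.eval (m + g) + (1 / 2) * p₁.eval (m + g) := by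
  have hp₀c := cellAverage_sub_add_cellAverage_add_of_degree_le_one hh d m hp₀deg
  have hp₁a := cellAverage_sub_add_cellAverage_add_of_degree_le_one hh d m hp₁deg
  let e : ℝ[X] := M - (1 / 2 : ℝ) • (p₀ + p₁)
  have hedeg : e.degree ≤ 2 := by
    have hsum : (p₀ + p₁).degree ≤ 2 :=
      (degree_add_le_of_degree_le hp₀deg hp₁deg).trans (by norm_num)
    simpa only [max_self] using degree_sub_le_of_le hMdeg ((degree_smul_le _ _).trans hsum)
  have he (z : ℝ) : cellAverage h z e =
      cellAverage h z M - 1 / 2 * (cellAverage h z p₀ + cellAverage h z p₁) := by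
    simp only [e, map_sub, map_smul, map_add, smul_eq_mul]
  have hzero : e.eval (m + g) = 0 :=
    eval_eq_zero_of_cellAverage_eq hh hd hg hedeg (by rw [he]; linarith)
      (by rw [he, he]; linarith)
  simp only [e, eval_sub, eval_smul, eval_add, smul_eq_mul] at hzero
  linarith

/-- On uniform cells `I₋₁ = [−3h/2, −h/2]`, `I₀ = [−h/2, h/2]`, `I₁ = [h/2, 3h/2]` of
width `h > 0`: if `p₀` (degree ≤ 1) has cell averages `a` on `I₋₁` and `b` on `I₀`,
`p₁` (degree ≤ 1) has cell averages `b` on `I₀` and `c` on `I₁`, and `M` (degree ≤ 2) has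
cell averages `a`, `b`, `c` on `I₋₁`, `I₀`, `I₁`, then at both Gauss quadrature points
`x_G = ±h/(2√3)` of `I₀` one has `M(x_G) = (1/2)p₀(x_G) + (1/2)p₁(x_G)`; i.e. the linear
weights of the third-order WENO reconstruction at the two Gauss points are
`γ₀ = γ₁ = 1/2`. -/
theorem weno_linear_weights_half (h : ℝ) (hh : 0 < h)
    (p₀ p₁ M : Polynomial ℝ)
    (hp₀deg : p₀.degree ≤ 1) (hp₁deg : p₁.degree ≤ 1) (hMdeg : M.degree ≤ 2)
    (a b c : ℝ)
    (hp₀a : (1 / h) * ∫ x in (-(3 * h / 2))..(-(h / 2)), p₀.eval x = a)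
    (hp₀b : (1 / h) * ∫ x in (-(h / 2))..(h / 2), p₀.eval x = b)
    (hp₁b : (1 / h) * ∫ x in (-(h / 2))..(h / 2), p₁.eval x = b)
    (hp₁c : (1 / h) * ∫ x in (h / 2)..(3 * h / 2), p₁.eval x = c)
    (hMa : (1 / h) * ∫ x in (-(3 * h / 2))..(-(h / 2)), M.eval x = a)
    (hMb : (1 / h) * ∫ x in (-(h / 2))..(h / 2), M.eval x = b)
    (hMc : (1 / h) * ∫ x in (h / 2)..(3 * h / 2), M.eval x = c) :
    ∀ xG : ℝ, (xG = -(h / (2 * Real.sqrt 3)) ∨ xG = h / (2 * Real.sqrt 3)) →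
      M.eval xG = (1 / 2) * p₀.eval xG + (1 / 2) * p₁.eval xG := by
  intro xG hxG
  have hsq : xG ^ 2 = h ^ 2 / 12 := by
    rcases hxG with rfl | rfl <;> simp only [neg_sq, sq_gaussNode]
  rw [← cellAverage_eq_integral (m := 0 - h) (by ring) (by ring)] at hp₀a hMa
  rw [← cellAverage_eq_integral (m := 0) (by ring) (by ring)] at hp₀b hp₁b hMb
  rw [← cellAverage_eq_integral (m := 0 + h) (by ring) (by ring)] at hp₁c hMc
  simpa only [zero_add] using weno_linear_weights_half_general hh.ne' hh.ne' hsq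
    hp₀deg hp₁deg hMdeg hp₀a hp₀b hp₁b hp₁c hMa hMb hMc
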